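/- The set α = {(1/2,1/4), (1/6,11/12), (5/6,11/12)} is an optimal set of three-means for P with quantization error V₃ = 5/96. -/

import Mathlib

open MeasureTheory ProbabilityTheory
open scoped ENNReal

noncomputable section

abbrev E2 : Type := EuclideanSpace ℝ (Fin 2)

/-- The point (a,b) of the Euclidean plane. -/
def pt (a b : ℝ) : E2 := (WithLp.equiv 2 (Fin 2 → ℝ)).symm ![a, b]

/-- The four generating similarities S₁,…,S₄ (indexed 0,…,3) of the Sierpiński carpet. -/
def S : Fin 4 → E2 → E2
  | 0 => fun x => pt (x 0 / 3) (x 1 / 3)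
  | 1 => fun x => pt (x 0 / 3 + 2/3) (x 1 / 3)
  | 2 => fun x => pt (x 0 / 3) (x 1 / 3 + 2/3)
  | 3 => fun x => pt (x 0 / 3 + 2/3) (x 1 / 3 + 2/3)

/-- The self-affinity equation P = (1/8)P∘S₁⁻¹ + (1/8)P∘S₂⁻¹ + (3/8)P∘S₃⁻¹ + (3/8)P∘S₄⁻¹. -/
def carpetEq (P : Measure E2) : Prop :=
  P = (1/8 : ℝ≥0∞) • P.map (S 0) + (1/8 : ℝ≥0∞) • P.map (S 1)
    + (3/8 : ℝ≥0∞) • P.map (S 2) + (3/8 : ℝ≥0∞) • P.map (S 3)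

/-- The unit square [0,1]². -/
def unitSq : Set E2 := {x | ∀ i, x i ∈ Set.Icc (0:ℝ) 1}

/-- S_ω = S_{ω₁} ∘ ⋯ ∘ S_{ω_k} for a word ω. -/
def Sw (w : List (Fin 4)) : E2 → E2 := fun x => w.foldr S x

/-- The basic square J_ω = S_ω([0,1]²). -/
def Jw (w : List (Fin 4)) : Set E2 := Sw w '' unitSq

/-- The basic square J_i of the first level. -/
def Jset (i : Fin 4) : Set E2 := S i '' unitSq

/-- The mass centroid (conditional expectation) of P on a set A. -/
def ctr (P : Measure E2) (A : Set E2) : E2 := (P A).toReal⁻¹ • ∫ x in A, x ∂P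

/-- E(ω) : distortion error on J_ω about its centroid a(ω) = S_ω(1/2,3/4). -/
def Err (P : Measure E2) (w : List (Fin 4)) : ℝ :=
  ∫ x in Jw w, ‖x - Sw w (pt (1/2) (3/4))‖^2 ∂P

/-- E(ωi, ωj) : distortion error on J_{ωi} ∪ J_{ωj} about its centroid. -/
def Epair (P : Measure E2) (w : List (Fin 4)) (i j : Fin 4) : ℝ :=
  ∫ x in (Jw (w ++ [i]) ∪ Jw (w ++ [j])),
    ‖x - ctr P (Jw (w ++ [i]) ∪ Jw (w ++ [j]))‖^2 ∂P


/-! ### A finite branch-and-bound check for the sixteen grid points -/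

/-- Positive replacement of a cluster weight. -/
def dd (W : ℕ) : ℕ := if W = 0 then 1 else W

/-- The partial assignment already costs at least 44. -/
def chk (Q W0 X0 Y0 W1 X1 Y1 W2 X2 Y2 : ℕ) : Bool :=
  Nat.ble ((X0 * X0 + Y0 * Y0) * dd W1 * dd W2 + (X1 * X1 + Y1 * Y1) * dd W0 * dd W2
    + (X2 * X2 + Y2 * Y2) * dd W0 * dd W1 + 44 * (dd W0 * dd W1 * dd W2))
    (Q * (dd W0 * dd W1 * dd W2))

/-- Branch and bound over all assignments of the points in the list to three clusters. -/
def go : List (ℕ × ℕ × ℕ) → ℕ → ℕ → ℕ → ℕ → ℕ → ℕ → ℕ → ℕ → ℕ → ℕ → Bool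
  | [], Q, W0, X0, Y0, W1, X1, Y1, W2, X2, Y2 => chk Q W0 X0 Y0 W1 X1 Y1 W2 X2 Y2
  | (x, y, w) :: t, Q, W0, X0, Y0, W1, X1, Y1, W2, X2, Y2 =>
    chk Q W0 X0 Y0 W1 X1 Y1 W2 X2 Y2 ||
    (go t (Q + w * (x * x + y * y)) (W0 + w) (X0 + w * x) (Y0 + w * y) W1 X1 Y1 W2 X2 Y2 &&
     (go t (Q + w * (x * x + y * y)) W0 X0 Y0 (W1 + w) (X1 + w * x) (Y1 + w * y) W2 X2 Y2 &&
      go t (Q + w * (x * x + y * y)) W0 X0 Y0 W1 X1 Y1 (W2 + w) (X2 + w * x) (Y2 + w * y)))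

/-- The sixteen weighted grid points. -/
def pts : List (ℕ × ℕ × ℕ) :=
  [(3,1,3),(3,3,9),(0,3,9),(0,1,3),(2,3,9),(1,3,9),(2,1,3),(0,0,1),(3,0,1),(0,2,3),
   (1,1,3),(3,2,3),(1,0,1),(1,2,3),(2,2,3),(2,0,1)]

set_option maxRecDepth 100000 in
theorem go_pts : go pts 0 0 0 0 0 0 0 0 0 0 = true := by
  decide +kernel

theorem dd_pos (W : ℕ) : (0:ℝ) < dd W := by
  unfold dd; split_ifs with h
  · norm_num
  · exact_mod_cast Nat.pos_of_ne_zero h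

theorem cl (W X Y : ℕ) (u v : ℝ) (h : W = 0 → X = 0 ∧ Y = 0) :
    -(((X:ℝ) * X + Y * Y) / dd W) ≤ W * (u^2 + v^2) - 2 * (X * u + Y * v) := by
  have hd := dd_pos W
  by_cases hW : W = 0
  · obtain ⟨h1, h2⟩ := h hW
    subst hW h1 h2
    simp
  · have e : dd W = W := by simp [dd, hW]
    rw [e] at hd ⊢
    rw [← neg_div, div_le_iff₀ hd]
    nlinarith [sq_nonneg (W * u - X), sq_nonneg (W * v - Y)]

/-- Cost of an assigned cluster family. -/
def cost (u v : Fin 3 → ℝ) (Q W0 X0 Y0 W1 X1 Y1 W2 X2 Y2 : ℕ) : ℝ :=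
  Q + (W0 * (u 0 ^2 + v 0 ^2) - 2 * (X0 * u 0 + Y0 * v 0))
    + (W1 * (u 1 ^2 + v 1 ^2) - 2 * (X1 * u 1 + Y1 * v 1))
    + (W2 * (u 2 ^2 + v 2 ^2) - 2 * (X2 * u 2 + Y2 * v 2))

theorem chk_sound (u v : Fin 3 → ℝ) (Q W0 X0 Y0 W1 X1 Y1 W2 X2 Y2 : ℕ)
    (h0 : W0 = 0 → X0 = 0 ∧ Y0 = 0) (h1 : W1 = 0 → X1 = 0 ∧ Y1 = 0)
    (h2 : W2 = 0 → X2 = 0 ∧ Y2 = 0)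
    (h : chk Q W0 X0 Y0 W1 X1 Y1 W2 X2 Y2 = true) :
    44 ≤ cost u v Q W0 X0 Y0 W1 X1 Y1 W2 X2 Y2 := by
  have a0 := cl W0 X0 Y0 (u 0) (v 0) h0
  have a1 := cl W1 X1 Y1 (u 1) (v 1) h1
  have a2 := cl W2 X2 Y2 (u 2) (v 2) h2
  have d0 := dd_pos W0
  have d1 := dd_pos W1
  have d2 := dd_pos W2
  have hh := Nat.le_of_ble_eq_true h
  have hr : (((X0:ℝ) * X0 + Y0 * Y0) * dd W1 * dd W2 + (X1 * X1 + Y1 * Y1) * dd W0 * dd W2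
    + (X2 * X2 + Y2 * Y2) * dd W0 * dd W1 + 44 * (dd W0 * dd W1 * dd W2))
      ≤ (Q * (dd W0 * dd W1 * dd W2)) := by exact_mod_cast hh
  have key : ((X0:ℝ) * X0 + Y0 * Y0) / dd W0 + ((X1:ℝ) * X1 + Y1 * Y1) / dd W1
      + ((X2:ℝ) * X2 + Y2 * Y2) / dd W2 + 44 ≤ Q := by
    have hp : (0:ℝ) < dd W0 * dd W1 * dd W2 := by positivity
    refine le_of_mul_le_mul_right ?_ hp
    refine le_trans (le_of_eq ?_) hr
    field_simp
  unfold cost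
  linarith

/-- Squared distance to the nearest of the three centres. -/
def mn (u v : Fin 3 → ℝ) (x y : ℝ) : ℝ :=
  min ((x - u 0)^2 + (y - v 0)^2)
    (min ((x - u 1)^2 + (y - v 1)^2) ((x - u 2)^2 + (y - v 2)^2))

theorem mn_nonneg (u v : Fin 3 → ℝ) (x y : ℝ) : 0 ≤ mn u v x y := by
  unfold mn
  refine le_min (by positivity) (le_min (by positivity) (by positivity))

/-- Weighted sum of squared distances over a list. -/
def lsum (u v : Fin 3 → ℝ) : List (ℕ × ℕ × ℕ) → ℝ
  | [] => 0
  | (x, y, w) :: t => w * mn u v x y + lsum u v t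

theorem lsum_nonneg (u v : Fin 3 → ℝ) : ∀ l, 0 ≤ lsum u v l
  | [] => le_rfl
  | (x, y, w) :: t => by
    have := lsum_nonneg u v t
    have := mn_nonneg u v x y
    unfold lsum; positivity

theorem hstep (W X Y w x y : ℕ) (h : W = 0 → X = 0 ∧ Y = 0) :
    W + w = 0 → X + w * x = 0 ∧ Y + w * y = 0 := by
  intro e
  have e1 : W = 0 := by omega
  have e2 : w = 0 := by omega
  obtain ⟨a, b⟩ := h e1
  subst e2 a b
  simp

theorem go_sound (u v : Fin 3 → ℝ) : ∀ (l : List (ℕ × ℕ × ℕ)) (Q W0 X0 Y0 W1 X1 Y1 W2 X2 Y2 : ℕ),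
    (W0 = 0 → X0 = 0 ∧ Y0 = 0) → (W1 = 0 → X1 = 0 ∧ Y1 = 0) → (W2 = 0 → X2 = 0 ∧ Y2 = 0) →
    go l Q W0 X0 Y0 W1 X1 Y1 W2 X2 Y2 = true →
    44 ≤ cost u v Q W0 X0 Y0 W1 X1 Y1 W2 X2 Y2 + lsum u v l
  | [], Q, W0, X0, Y0, W1, X1, Y1, W2, X2, Y2, h0, h1, h2, h => by
    have := chk_sound u v _ _ _ _ _ _ _ _ _ _ h0 h1 h2 h
    simpa [lsum] using this
  | (x, y, w) :: t, Q, W0, X0, Y0, W1, X1, Y1, W2, X2, Y2, h0, h1, h2, h => by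
    unfold go at h
    rw [Bool.or_eq_true, Bool.and_eq_true, Bool.and_eq_true] at h
    rcases h with h | ⟨g0, g1, g2⟩
    · have := chk_sound u v _ _ _ _ _ _ _ _ _ _ h0 h1 h2 h
      have := lsum_nonneg u v ((x, y, w) :: t)
      linarith
    · have b0 := go_sound u v t _ _ _ _ _ _ _ _ _ _ (hstep _ _ _ w x y h0) h1 h2 g0
      have b1 := go_sound u v t _ _ _ _ _ _ _ _ _ _ h0 (hstep _ _ _ w x y h1) h2 g1
      have b2 := go_sound u v t _ _ _ _ _ _ _ _ _ _ h0 h1 (hstep _ _ _ w x y h2) g2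
      have hm : mn u v x y = (x - u 0)^2 + (y - v 0)^2 ∨ mn u v x y = (x - u 1)^2 + (y - v 1)^2 ∨
          mn u v x y = (x - u 2)^2 + (y - v 2)^2 := by
        unfold mn
        rcases min_choice (((x:ℝ) - u 0)^2 + (y - v 0)^2)
          (min ((x - u 1)^2 + (y - v 1)^2) ((x - u 2)^2 + (y - v 2)^2)) with h | h
        · exact Or.inl h
        · rw [h]
          exact Or.inr (min_choice _ _)
      unfold cost at *
      unfold lsum
      push_cast at b0 b1 b2
      rcases hm with hm | hm | hm <;> rw [hm]
      · linarith
      · linarith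
      · linarith

theorem grid_bound (u v : Fin 3 → ℝ) : 44 ≤ lsum u v pts := by
  have := go_sound u v pts 0 0 0 0 0 0 0 0 0 0 (by simp) (by simp) (by simp) go_pts
  simpa [cost] using this

/-! ### Basic facts on the maps and the measure -/

theorem pt_zero (a b : ℝ) : (pt a b) 0 = a := rfl
theorem pt_one (a b : ℝ) : (pt a b) 1 = b := rfl

theorem nsq (x c : E2) : ‖x - c‖^2 = (x 0 - c 0)^2 + (x 1 - c 1)^2 := by
  rw [EuclideanSpace.norm_sq_eq, Fin.sum_univ_two]
  simp

theorem pt_cont (f g : E2 → ℝ) (hf : Continuous f) (hg : Continuous g) :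
    Continuous (fun x => pt (f x) (g x)) := by
  unfold pt
  refine (PiLp.continuous_toLp 2 _).comp ?_
  refine continuous_pi fun i => ?_
  fin_cases i
  · exact hf
  · exact hg

theorem S_cont (k : Fin 4) : Continuous (S k) := by
  fin_cases k <;> exact pt_cont _ _ (by fun_prop) (by fun_prop)

theorem unitSq_closed : IsClosed unitSq := by
  have : unitSq = ⋂ i, {x : E2 | x i ∈ Set.Icc (0:ℝ) 1} := by
    ext x; simp [unitSq]
  rw [this]
  exact isClosed_iInter fun i => isClosed_Icc.preimage (by fun_prop)

theorem unitSq_compact : IsCompact unitSq := by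
  refine Metric.isCompact_of_isClosed_isBounded unitSq_closed ?_
  refine (Metric.isBounded_closedBall (x := (0:E2)) (r := 2)).subset ?_
  intro x hx
  rw [mem_closedBall_zero_iff]
  have h := nsq x 0
  have h0 := hx 0
  have h1 := hx 1
  simp only [sub_zero, PiLp.zero_apply] at h
  have : ‖x‖^2 ≤ 2^2 := by rw [h]; nlinarith [h0.1, h0.2, h1.1, h1.2]
  exact le_of_sq_le_sq this (by norm_num)

/-- Points further than t (in the sup sense) outside the square. -/
def Aset (t : ℝ) : Set E2 := {x | x 0 < -t ∨ 1 + t < x 0 ∨ x 1 < -t ∨ 1 + t < x 1}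

theorem Aset_meas (t : ℝ) : MeasurableSet (Aset t) := by
  have e : Aset t = {x : E2 | x 0 < -t} ∪ ({x : E2 | 1 + t < x 0} ∪
      ({x : E2 | x 1 < -t} ∪ {x : E2 | 1 + t < x 1})) := by
    ext x; simp [Aset]
  have : IsOpen (Aset t) := by
    rw [e]
    refine IsOpen.union ?_ (IsOpen.union ?_ (IsOpen.union ?_ ?_))
    · exact isOpen_lt (by fun_prop) (by fun_prop)
    · exact isOpen_lt (by fun_prop) (by fun_prop)
    · exact isOpen_lt (by fun_prop) (by fun_prop)
    · exact isOpen_lt (by fun_prop) (by fun_prop)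
  exact this.measurableSet

theorem Aset_pre (k : Fin 4) (t : ℝ) (ht : 0 < t) : S k ⁻¹' Aset t ⊆ Aset (3 * t) := by
  intro x hx
  fin_cases k <;> simp only [Aset, Set.mem_preimage, Set.mem_ofPred_eq, S, pt_zero, pt_one] at hx ⊢ <;>
    rcases hx with h | h | h | h
  all_goals first
    | (left; linarith)
    | (right; left; linarith)
    | (right; right; left; linarith)
    | (right; right; right; linarith)

theorem wsum : (1/8 + 1/8 + 3/8 + 3/8 : ℝ≥0∞) = 1 := by
  rw [← ENNReal.toReal_eq_one_iff]
  have h1 : (1/8 : ℝ≥0∞) ≠ ⊤ := by finiteness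
  have h3 : (3/8 : ℝ≥0∞) ≠ ⊤ := by finiteness
  rw [ENNReal.toReal_add (by finiteness) h3, ENNReal.toReal_add (by finiteness) h3,
    ENNReal.toReal_add h1 h1]
  norm_num

theorem Aset_step (P : Measure E2) (hP : carpetEq P) (t : ℝ) (ht : 0 < t) :
    P (Aset t) ≤ P (Aset (3 * t)) := by
  have h : P (Aset t) = (1/8 : ℝ≥0∞) * P (S 0 ⁻¹' Aset t) + (1/8 : ℝ≥0∞) * P (S 1 ⁻¹' Aset t)
      + (3/8 : ℝ≥0∞) * P (S 2 ⁻¹' Aset t) + (3/8 : ℝ≥0∞) * P (S 3 ⁻¹' Aset t) := by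
    conv_lhs => rw [hP]
    simp only [Measure.add_apply, Measure.smul_apply, smul_eq_mul]
    rw [Measure.map_apply (S_cont 0).measurable (Aset_meas t),
      Measure.map_apply (S_cont 1).measurable (Aset_meas t),
      Measure.map_apply (S_cont 2).measurable (Aset_meas t),
      Measure.map_apply (S_cont 3).measurable (Aset_meas t)]
  rw [h]
  calc _ ≤ (1/8 : ℝ≥0∞) * P (Aset (3*t)) + (1/8 : ℝ≥0∞) * P (Aset (3*t))
      + (3/8 : ℝ≥0∞) * P (Aset (3*t)) + (3/8 : ℝ≥0∞) * P (Aset (3*t)) := by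
        gcongr <;> exact Aset_pre _ t ht
    _ = _ := by
      rw [← add_mul, ← add_mul, ← add_mul, wsum, one_mul]

theorem Aset_zero (P : Measure E2) [IsProbabilityMeasure P] (hP : carpetEq P) (t : ℝ)
    (ht : 0 < t) : P (Aset t) = 0 := by
  have h1 : ∀ n : ℕ, P (Aset t) ≤ P (Aset (3^n * t)) := by
    intro n
    induction n with
    | zero => simp
    | succ n ih =>
      refine ih.trans ?_
      have := Aset_step P hP (3^n * t) (by positivity)
      rwa [← mul_assoc, ← pow_succ'] at this
  have hanti : Antitone (fun n : ℕ => Aset (3^n * t)) := by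
    intro m n hmn x hx
    have : (3:ℝ)^m * t ≤ 3^n * t := by gcongr; norm_num
    simp only [Aset, Set.mem_ofPred_eq] at hx ⊢
    rcases hx with h | h | h | h
    · left; linarith
    · right; left; linarith
    · right; right; left; linarith
    · right; right; right; linarith
  have hlim := tendsto_measure_iInter_atTop (μ := P)
    (fun n => (Aset_meas (3^n * t)).nullMeasurableSet) hanti ⟨0, measure_ne_top _ _⟩
  have hempty : (⋂ n : ℕ, Aset (3^n * t)) = ∅ := by
    rw [Set.eq_empty_iff_forall_notMem]
    intro x hx
    rw [Set.mem_iInter] at hx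
    obtain ⟨n, hn⟩ := pow_unbounded_of_one_lt ((|x 0| + |x 1|) / t) (by norm_num : (1:ℝ) < 3)
    rw [div_lt_iff₀ ht] at hn
    have a := hx n
    have b0 := abs_le.1 (le_refl |x 0|)
    have b1 := abs_le.1 (le_refl |x 1|)
    have c0 := abs_nonneg (x 0)
    have c1 := abs_nonneg (x 1)
    simp only [Aset, Set.mem_ofPred_eq] at a
    rcases a with h | h | h | h <;> linarith
  rw [hempty, measure_empty] at hlim
  exact le_antisymm (ge_of_tendsto' hlim h1) bot_le

theorem ae_sq (P : Measure E2) [IsProbabilityMeasure P] (hP : carpetEq P) :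
    ∀ᵐ x ∂P, x ∈ unitSq := by
  have h : ∀ n : ℕ, ∀ᵐ x ∂P, x ∉ Aset (1 / ((n:ℝ) + 1)) := by
    intro n
    rw [ae_iff]
    simpa using Aset_zero P hP (1 / ((n:ℝ) + 1)) (by positivity)
  rw [← ae_all_iff] at h
  filter_upwards [h] with x hx
  have key : ∀ r : ℝ, (∀ n : ℕ, -(1 / ((n:ℝ) + 1)) ≤ r) → 0 ≤ r := by
    intro r hr
    by_contra hneg
    obtain ⟨n, hn⟩ := exists_nat_one_div_lt (show (0:ℝ) < -r by linarith)
    have := hr n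
    linarith
  simp only [Aset, Set.mem_ofPred_eq, not_or, not_lt] at hx
  intro i
  fin_cases i
  · refine ⟨key _ fun n => (hx n).1, sub_nonneg.1 (key _ fun n => ?_)⟩
    have := (hx n).2.1
    simp only [Fin.zero_eta] at *
    linarith
  · refine ⟨key _ fun n => (hx n).2.2.1, sub_nonneg.1 (key _ fun n => ?_)⟩
    have := (hx n).2.2.2
    simp only [Fin.mk_one] at *
    linarith

theorem integ (P : Measure E2) [IsProbabilityMeasure P] (hP : carpetEq P) (f : E2 → ℝ)
    (hf : Continuous f) : Integrable f P := by
  have h := hf.continuousOn.integrableOn_compact (μ := P) unitSq_compact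
  rwa [IntegrableOn, Measure.restrict_eq_self_of_ae_mem (ae_sq P hP)] at h

theorem int_eq (P : Measure E2) [IsProbabilityMeasure P] (hP : carpetEq P) (f : E2 → ℝ)
    (hf : Continuous f) : ∫ x, f x ∂P = 1/8 * ∫ x, f (S 0 x) ∂P + 1/8 * ∫ x, f (S 1 x) ∂P
      + 3/8 * ∫ x, f (S 2 x) ∂P + 3/8 * ∫ x, f (S 3 x) ∂P := by
  have hm : ∀ k, Integrable f (P.map (S k)) := fun k =>
    (integrable_map_measure hf.aestronglyMeasurable (S_cont k).aemeasurable).2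
      (integ P hP _ (hf.comp (S_cont k)))
  have hi : ∀ k, ∫ x, f x ∂(P.map (S k)) = ∫ x, f (S k x) ∂P := fun k =>
    integral_map (S_cont k).aemeasurable hf.aestronglyMeasurable
  have h1 : (1/8 : ℝ≥0∞) ≠ ⊤ := by finiteness
  have h3 : (3/8 : ℝ≥0∞) ≠ ⊤ := by finiteness
  have i0 := (hm 0).smul_measure h1
  have i1 := (hm 1).smul_measure h1
  have i2 := (hm 2).smul_measure h3
  have i3 := (hm 3).smul_measure h3
  conv_lhs => rw [hP]
  rw [integral_add_measure ((i0.add_measure i1).add_measure i2) i3,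
    integral_add_measure (i0.add_measure i1) i2, integral_add_measure i0 i1]
  simp only [integral_smul_measure, hi]
  norm_num

/-- A quadratic polynomial. -/
def quad (a b c d e f : ℝ) (x : E2) : ℝ :=
  a + b * x 0 + c * x 1 + d * (x 0)^2 + e * (x 0 * x 1) + f * (x 1)^2

theorem quad_cont (a b c d e f : ℝ) : Continuous (quad a b c d e f) := by
  unfold quad; fun_prop

theorem quad_int (P : Measure E2) [IsProbabilityMeasure P] (hP : carpetEq P) (a b c d e f : ℝ) :
    ∫ x, quad a b c d e f x ∂P = a + b * (∫ x, x 0 ∂P) + c * (∫ x, x 1 ∂P)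
      + d * (∫ x, (x 0)^2 ∂P) + e * (∫ x, x 0 * x 1 ∂P) + f * (∫ x, (x 1)^2 ∂P) := by
  unfold quad
  rw [integral_add, integral_add, integral_add, integral_add, integral_add]
  · simp only [integral_const_mul, integral_const, probReal_univ, one_smul]
  all_goals exact integ P hP _ (by fun_prop)

theorem moments (P : Measure E2) [IsProbabilityMeasure P] (hP : carpetEq P) :
    (∫ x, x 0 ∂P) = 1/2 ∧ (∫ x, x 1 ∂P) = 3/4 ∧ (∫ x, (x 0)^2 ∂P) = 3/8 ∧
    (∫ x, x 0 * x 1 ∂P) = 3/8 ∧ (∫ x, (x 1)^2 ∂P) = 21/32 := by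
  have hq := quad_int P hP
  have gen : ∀ a b c d e f : ℝ, ∫ x, quad a b c d e f x ∂P =
      1/8 * ∫ x, quad a (b/3) (c/3) (d/9) (e/9) (f/9) x ∂P
      + 1/8 * ∫ x, quad (a + b*(2/3) + d*(4/9)) (b/3 + d*(4/9)) (c/3 + e*(2/9))
          (d/9) (e/9) (f/9) x ∂P
      + 3/8 * ∫ x, quad (a + c*(2/3) + f*(4/9)) (b/3 + e*(2/9)) (c/3 + f*(4/9))
          (d/9) (e/9) (f/9) x ∂P
      + 3/8 * ∫ x, quad (a + b*(2/3) + c*(2/3) + d*(4/9) + e*(4/9) + f*(4/9))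
          (b/3 + d*(4/9) + e*(2/9)) (c/3 + e*(2/9) + f*(4/9)) (d/9) (e/9) (f/9) x ∂P := by
    intro a b c d e f
    rw [int_eq P hP _ (quad_cont a b c d e f)]
    congr 1
    · congr 1
      · congr 1
        · congr 2; funext x; simp only [quad, S, pt_zero, pt_one]; ring
        · congr 2; funext x; simp only [quad, S, pt_zero, pt_one]; ring
      · congr 2; funext x; simp only [quad, S, pt_zero, pt_one]; ring
    · congr 2; funext x; simp only [quad, S, pt_zero, pt_one]; ring
  simp only [hq] at gen
  have g1 := gen 0 1 0 0 0 0
  have g2 := gen 0 0 1 0 0 0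
  have g3 := gen 0 0 0 1 0 0
  have g4 := gen 0 0 0 0 1 0
  have g5 := gen 0 0 0 0 0 1
  refine ⟨?_, ?_, ?_, ?_, ?_⟩ <;> linarith

theorem quad_val (P : Measure E2) [IsProbabilityMeasure P] (hP : carpetEq P) (a b c d e f : ℝ) :
    ∫ x, quad a b c d e f x ∂P = a + b * (1/2) + c * (3/4) + d * (3/8) + e * (3/8)
      + f * (21/32) := by
  obtain ⟨h1, h2, h3, h4, h5⟩ := moments P hP
  rw [quad_int P hP, h1, h2, h3, h4, h5]

/-! ### The lower bound -/

/-- Distortion of three centres. -/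
def G (u v : Fin 3 → ℝ) (x : E2) : ℝ := mn u v (3 * x 0) (3 * x 1)

theorem G_cont (u v : Fin 3 → ℝ) : Continuous (G u v) := by
  unfold G mn; fun_prop

/-- Concavity-type lower bound of the distortion on a cell by its values at the corners. -/
theorem mn_cell (u v : Fin 3 → ℝ) (a b x y : ℝ) (hx0 : 0 ≤ x) (hx1 : x ≤ 1) (hy0 : 0 ≤ y)
    (hy1 : y ≤ 1) :
    (1-x)*(1-y) * mn u v a b + x*(1-y) * mn u v (a+1) b + (1-x)*y * mn u v a (b+1)
      + x*y * mn u v (a+1) (b+1) - (x*(1-x) + y*(1-y)) ≤ mn u v (a + x) (b + y) := by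
  have k0 : 0 ≤ (1-x)*(1-y) := mul_nonneg (by linarith) (by linarith)
  have k1 : 0 ≤ x*(1-y) := mul_nonneg (by linarith) (by linarith)
  have k2 : 0 ≤ (1-x)*y := mul_nonneg (by linarith) (by linarith)
  have k3 : 0 ≤ x*y := mul_nonneg (by linarith) (by linarith)
  have main : ∀ j : Fin 3, (∀ p q, mn u v p q ≤ (p - u j)^2 + (q - v j)^2) →
      (1-x)*(1-y) * mn u v a b + x*(1-y) * mn u v (a+1) b + (1-x)*y * mn u v a (b+1)
      + x*y * mn u v (a+1) (b+1) - (x*(1-x) + y*(1-y)) ≤ (a + x - u j)^2 + (b + y - v j)^2 := by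
    intro j hj
    have m0 := mul_le_mul_of_nonneg_left (hj a b) k0
    have m1 := mul_le_mul_of_nonneg_left (hj (a+1) b) k1
    have m2 := mul_le_mul_of_nonneg_left (hj a (b+1)) k2
    have m3 := mul_le_mul_of_nonneg_left (hj (a+1) (b+1)) k3
    refine le_trans (sub_le_sub_right (add_le_add (add_le_add (add_le_add m0 m1) m2) m3) _) ?_
    apply le_of_eq
    ring
  refine le_min (main 0 fun p q => min_le_left _ _) (le_min (main 1 fun p q => ?_)
    (main 2 fun p q => ?_))
  · exact (min_le_right _ _).trans (min_le_left _ _)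
  · exact (min_le_right _ _).trans (min_le_right _ _)

theorem cell_bound (P : Measure E2) [IsProbabilityMeasure P] (hP : carpetEq P)
    (u v : Fin 3 → ℝ) (k : Fin 4) (a b : ℝ)
    (hk : ∀ x, 3 * (S k x) 0 = a + x 0 ∧ 3 * (S k x) 1 = b + x 1) :
    1/8 * mn u v a b + 1/8 * mn u v (a+1) b + 3/8 * mn u v a (b+1)
      + 3/8 * mn u v (a+1) (b+1) - 7/32 ≤ ∫ x, G u v (S k x) ∂P := by
  set A := mn u v a b with hA
  set B := mn u v (a+1) b with hB
  set C := mn u v a (b+1) with hC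
  set D := mn u v (a+1) (b+1) with hD
  have h := quad_val P hP A (-A + B - 1) (-A + C - 1) 1 (A - B - C + D) 1
  have hle : ∫ x, quad A (-A + B - 1) (-A + C - 1) 1 (A - B - C + D) 1 x ∂P
      ≤ ∫ x, G u v (S k x) ∂P := by
    refine integral_mono_ae (integ P hP _ (quad_cont _ _ _ _ _ _))
      (integ P hP _ ((G_cont u v).comp (S_cont k))) ?_
    filter_upwards [ae_sq P hP] with x hx
    have := mn_cell u v a b (x 0) (x 1) (hx 0).1 (hx 0).2 (hx 1).1 (hx 1).2
    unfold G
    rw [(hk x).1, (hk x).2]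
    refine le_trans (le_of_eq ?_) this
    unfold quad
    ring
  linarith

theorem lower (P : Measure E2) [IsProbabilityMeasure P] (hP : carpetEq P) (u v : Fin 3 → ℝ) :
    15/32 ≤ ∫ x, G u v x ∂P := by
  rw [int_eq P hP _ (G_cont u v)]
  have c0 := cell_bound P hP u v 0 0 0
    (fun x => by simp only [S, pt_zero, pt_one]; constructor <;> ring)
  have c1 := cell_bound P hP u v 1 2 0
    (fun x => by simp only [S, pt_zero, pt_one]; constructor <;> ring)
  have c2 := cell_bound P hP u v 2 0 2
    (fun x => by simp only [S, pt_zero, pt_one]; constructor <;> ring)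
  have c3 := cell_bound P hP u v 3 2 2
    (fun x => by simp only [S, pt_zero, pt_one]; constructor <;> ring)
  have g := grid_bound u v
  simp only [pts, lsum] at g
  norm_num at g c0 c1 c2 c3
  linarith

theorem G_three (c0 c1 c2 x : E2) :
    min (‖x - c0‖^2) (min (‖x - c1‖^2) (‖x - c2‖^2)) =
      1/9 * G ![3 * c0 0, 3 * c1 0, 3 * c2 0] ![3 * c0 1, 3 * c1 1, 3 * c2 1] x := by
  have e : ∀ c : E2, ‖x - c‖^2 = 1/9 * ((3 * x 0 - 3 * c 0)^2 + (3 * x 1 - 3 * c 1)^2) := by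
    intro c; rw [nsq]; ring
  rw [e, e, e]
  simp only [G, mn, Matrix.cons_val_zero, Matrix.cons_val_one, Matrix.cons_val]
  rw [mul_min_of_nonneg _ _ (by norm_num), mul_min_of_nonneg _ _ (by norm_num)]

theorem lower_three (P : Measure E2) [IsProbabilityMeasure P] (hP : carpetEq P) (c0 c1 c2 : E2) :
    5/96 ≤ ∫ x : E2, min (‖x - c0‖^2) (min (‖x - c1‖^2) (‖x - c2‖^2)) ∂P := by
  simp only [G_three]
  rw [integral_const_mul]
  have := lower P hP ![3 * c0 0, 3 * c1 0, 3 * c2 0] ![3 * c0 1, 3 * c1 1, 3 * c2 1]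
  linarith

theorem upper_three (P : Measure E2) [IsProbabilityMeasure P] (hP : carpetEq P) :
    ∫ x : E2, min (‖x - pt (1/2) (1/4)‖^2)
        (min (‖x - pt (1/6) (11/12)‖^2) (‖x - pt (5/6) (11/12)‖^2)) ∂P ≤ 5/96 := by
  have hc : Continuous (fun x : E2 => min (‖x - pt (1/2) (1/4)‖^2)
        (min (‖x - pt (1/6) (11/12)‖^2) (‖x - pt (5/6) (11/12)‖^2))) := by fun_prop
  rw [int_eq P hP _ hc]
  have b0 : ∫ x, min (‖S 0 x - pt (1/2) (1/4)‖^2) (min (‖S 0 x - pt (1/6) (11/12)‖^2)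
      (‖S 0 x - pt (5/6) (11/12)‖^2)) ∂P
      ≤ ∫ x, quad (1/4 + 1/16) (-1/3) (-1/6) (1/9) 0 (1/9) x ∂P := by
    refine integral_mono (integ P hP _ (hc.comp (S_cont 0))) (integ P hP _ (quad_cont ..)) ?_
    intro x
    refine (min_le_left _ _).trans (le_of_eq ?_)
    rw [nsq]; simp only [quad, S, pt_zero, pt_one]; ring
  have b1 : ∫ x, min (‖S 1 x - pt (1/2) (1/4)‖^2) (min (‖S 1 x - pt (1/6) (11/12)‖^2)
      (‖S 1 x - pt (5/6) (11/12)‖^2)) ∂P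
      ≤ ∫ x, quad (1/36 + 1/16) (1/9) (-1/6) (1/9) 0 (1/9) x ∂P := by
    refine integral_mono (integ P hP _ (hc.comp (S_cont 1))) (integ P hP _ (quad_cont ..)) ?_
    intro x
    refine (min_le_left _ _).trans (le_of_eq ?_)
    rw [nsq]; simp only [quad, S, pt_zero, pt_one]; ring
  have b2 : ∫ x, min (‖S 2 x - pt (1/2) (1/4)‖^2) (min (‖S 2 x - pt (1/6) (11/12)‖^2)
      (‖S 2 x - pt (5/6) (11/12)‖^2)) ∂P
      ≤ ∫ x, quad (1/36 + 1/16) (-1/9) (-1/6) (1/9) 0 (1/9) x ∂P := by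
    refine integral_mono (integ P hP _ (hc.comp (S_cont 2))) (integ P hP _ (quad_cont ..)) ?_
    intro x
    refine ((min_le_right _ _).trans (min_le_left _ _)).trans (le_of_eq ?_)
    rw [nsq]; simp only [quad, S, pt_zero, pt_one]; ring
  have b3 : ∫ x, min (‖S 3 x - pt (1/2) (1/4)‖^2) (min (‖S 3 x - pt (1/6) (11/12)‖^2)
      (‖S 3 x - pt (5/6) (11/12)‖^2)) ∂P
      ≤ ∫ x, quad (1/36 + 1/16) (-1/9) (-1/6) (1/9) 0 (1/9) x ∂P := by
    refine integral_mono (integ P hP _ (hc.comp (S_cont 3))) (integ P hP _ (quad_cont ..)) ?_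
    intro x
    refine ((min_le_right _ _).trans (min_le_right _ _)).trans (le_of_eq ?_)
    rw [nsq]; simp only [quad, S, pt_zero, pt_one]; ring
  rw [quad_val P hP] at b0 b1 b2 b3
  linarith

theorem three_cover (β : Finset E2) (hβ : β.Nonempty) (h : β.card ≤ 3) :
    ∃ c0 c1 c2 : E2, β = {c0, c1, c2} := by
  have hpos := hβ.card_pos
  have : β.card = 1 ∨ β.card = 2 ∨ β.card = 3 := by omega
  rcases this with h | h | h
  · obtain ⟨a, ha⟩ := Finset.card_eq_one.1 h
    exact ⟨a, a, a, by simp [ha]⟩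
  · obtain ⟨a, b, -, ha⟩ := Finset.card_eq_two.1 h
    exact ⟨a, b, b, by simp [ha]⟩
  · obtain ⟨a, b, c, -, -, -, ha⟩ := Finset.card_eq_three.1 h
    exact ⟨a, b, c, ha⟩

theorem optimal_three_means (P : Measure E2) [IsProbabilityMeasure P] (hP : carpetEq P) :
    (∫ x : E2, min (‖x - pt (1/2) (1/4)‖^2)
        (min (‖x - pt (1/6) (11/12)‖^2) (‖x - pt (5/6) (11/12)‖^2)) ∂P = 5/96)
    ∧ ∀ (β : Finset E2) (hβ : β.Nonempty), β.card ≤ 3 →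
        5/96 ≤ ∫ x : E2, β.inf' hβ (fun c => ‖x - c‖^2) ∂P := by
  refine ⟨le_antisymm (upper_three P hP) (lower_three P hP _ _ _), ?_⟩
  intro β hβ hcard
  obtain ⟨c0, c1, c2, rfl⟩ := three_cover β hβ hcard
  have h := lower_three P hP c0 c1 c2
  refine h.trans (le_of_eq ?_)
  congr 1
  funext x
  rw [Finset.inf'_insert (Finset.insert_nonempty _ _), Finset.inf'_insert (Finset.singleton_nonempty _),
    Finset.inf'_singleton]
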